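/- Reduction of the half-order fractional radiative transport equation to a first-order-in-time equation (Section 3). Let σ_t, σ_s : [0,ℓ]×V → ℝ be C¹ in x and bounded measurable in v, and let p : [0,ℓ]×V×V → ℝ be C¹ in x, bounded measurable in (v,v'), p > 0. Let F : [0,ℓ]×V×[0,T] → ℝ be C¹ in (x,t) for each v, measurable in v, with ∂_t^{1/2}F well-defined. Suppose u : [0,ℓ]×V×[0,T] → ℝ is, for each v, C² in (x,t) with bounded derivatives, measurable in v, satisfies u(x,v,0) = 0 and lim_{t→0+} ∂_t^{1/2}u(x,v,t) = 0 for all (x,v), its mixed derivative ∂ₓ∂_t u is continuous and bounded (so that ∂ₓ and ∂_t^{1/2} commute), t ↦ ∂_t^{1/2}u(x,v,t) is absolutely continuous, and u solves ∂_t^{1/2}u + v∂ₓu + σ_t(x,v)u = σ_s(x,v)∫_V p(x,v,v')u(x,v',t)dv' + F(x,v,t) on Ω×V×(0,T). Then for all (x,v,t) ∈ Ω×V×(0,T): ∂_t u = v²∂ₓ²u + L₁u + ∫_V K(x,v,v')u(x,v',t)dv' + f(x,v,t), where L₁u = 2vσ_t(x,v)∂ₓu + (v∂ₓσ_t(x,v)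 + σ_t(x,v)²)u, K(x,v,v')u(x,v',t) = −v∂ₓ(σ_s(x,v)p(x,v,v'))u(x,v',t) − σ_s(x,v)p(x,v,v')((v+v')∂ₓ + σ_t(x,v) + σ_t(x,v'))u(x,v',t) + σ_s(x,v)u(x,v',t)∫_V σ_s(x,v'')p(x,v,v'')p(x,v'',v')dv'', and f = −v∂ₓF − σ_t(x,v)F + σ_s(x,v)∫_V p(x,v,v')F(x,v',t)dv' + ∂_t^{1/2}F. -/

import Mathlib

open MeasureTheory

/-- The velocity set `V = {v : v₀ ≤ |v| ≤ v₁}`. -/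
def Vset (v₀ v₁ : ℝ) : Set ℝ := Set.Icc (-v₁) (-v₀) ∪ Set.Icc v₀ v₁

/-- The Caputo fractional derivative of half order:
`∂ₜ^{1/2} f(t) = (1/Γ(1/2)) ∫₀ᵗ f'(τ)/√(t−τ) dτ`. -/
noncomputable def caputoHalf (f : ℝ → ℝ) (t : ℝ) : ℝ :=
  (Real.Gamma (1 / 2))⁻¹ * ∫ τ in Set.Ioo 0 t, deriv f τ / Real.sqrt (t - τ)

/-!
Write `D` for the half-order Caputo derivative in time and `A` for the transport operator in `x` and
`v`, so that the equation reads `D u = A u + F`. Convolving the kernel `1 / √t` with itself gives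
the constant `π = Γ(1/2)²` (Abel), hence `D (D u) = ∂ₜu` as soon as `D u` vanishes at time zero,
which boundedness of `∂ₜu` guarantees. Since `A` acts only on `x` and `v`, it commutes with `D`, and
therefore `∂ₜu = D (A u + F) = A (D u) + D F = A (A u) + A F + D F`. Expanding `A²` produces the
second-order operator and the kernel `K`.
-/

open Set Filter Function
open scoped Topology

section HalfIntegral

theorem integrableOn_Ioo_and_integral_eq_sub_of_hasDerivAt {a b : ℝ} (hab : a ≤ b) {G g : ℝ → ℝ}
    (hG : ContinuousOn G (Icc a b)) (hd : ∀ x ∈ Ioo a b, HasDerivAt G (g x) x)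
    (hg : ∀ x ∈ Ioo a b, 0 ≤ g x) :
    IntegrableOn g (Ioo a b) ∧ ∫ x in Ioo a b, g x = G b - G a := by
  have hi : IntegrableOn g (Ioc a b) := intervalIntegral.integrableOn_deriv_of_nonneg hG hd hg
  refine ⟨hi.mono_set Ioo_subset_Ioc_self, ?_⟩
  rw [← integral_Ioc_eq_integral_Ioo, ← intervalIntegral.integral_of_le hab]
  exact intervalIntegral.integral_eq_sub_of_hasDerivAt_of_le hab hG hd
    ((intervalIntegrable_iff_integrableOn_Ioc_of_le hab).2 hi)

theorem integrableOn_inv_sqrt_sub_and_integral_eq {t : ℝ} (ht : 0 ≤ t) :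
    IntegrableOn (fun τ => (√(t - τ))⁻¹) (Ioo 0 t) ∧
      ∫ τ in Ioo 0 t, (√(t - τ))⁻¹ = 2 * √t := by
  have hd : ∀ τ ∈ Ioo 0 t, HasDerivAt (fun τ => -2 * √(t - τ)) (√(t - τ))⁻¹ τ := by
    intro τ hτ
    have hpos : 0 < t - τ := sub_pos.2 hτ.2
    have h := ((((hasDerivAt_id τ).const_sub t).sqrt hpos.ne').const_mul (-2))
    refine h.congr_deriv ?_
    simp only [id_eq]
    field_simp
  have hc : ContinuousOn (fun τ => -2 * √(t - τ)) (Icc 0 t) := by fun_prop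
  simpa using integrableOn_Ioo_and_integral_eq_sub_of_hasDerivAt ht hc hd fun τ _ => by positivity

theorem integrableOn_inv_sqrt_sub (t : ℝ) : IntegrableOn (fun τ => (√(t - τ))⁻¹) (Ioo 0 t) := by
  rcases le_total 0 t with ht | ht
  · exact (integrableOn_inv_sqrt_sub_and_integral_eq ht).1
  · simp [Ioo_eq_empty_of_le ht]

theorem integrableOn_div_sqrt_sub {h : ℝ → ℝ} {t C : ℝ}
    (hm : AEStronglyMeasurable h (volume.restrict (Ioo 0 t))) (hC : ∀ τ ∈ Ioo 0 t, ‖h τ‖ ≤ C) :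
    IntegrableOn (fun τ => h τ / √(t - τ)) (Ioo 0 t) := by
  simp only [div_eq_mul_inv]
  exact (integrableOn_inv_sqrt_sub t).bdd_mul hm ((ae_restrict_mem measurableSet_Ioo).mono hC)

/-- The Riemann–Liouville integral of order `1/2`, so that the Caputo derivative `caputoHalf f` is
`halfIntegral (deriv f)`. As in `caputoHalf`, the integral is over the open interval `(0, t)`. -/
noncomputable def halfIntegral (h : ℝ → ℝ) (t : ℝ) : ℝ :=
  (Real.Gamma (1 / 2))⁻¹ * ∫ τ in Ioo 0 t, h τ / √(t - τ)

theorem caputoHalf_eq_halfIntegral (f : ℝ → ℝ) : caputoHalf f = halfIntegral (deriv f) := rfl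

theorem halfIntegral_congr {h k : ℝ → ℝ} {t : ℝ} (hhk : EqOn h k (Ioo 0 t)) :
    halfIntegral h t = halfIntegral k t := by
  unfold halfIntegral
  congr 1
  exact setIntegral_congr_fun measurableSet_Ioo fun τ hτ => by simp only [hhk hτ]

theorem halfIntegral_add {h k : ℝ → ℝ} {t : ℝ}
    (hh : IntegrableOn (fun τ => h τ / √(t - τ)) (Ioo 0 t))
    (hk : IntegrableOn (fun τ => k τ / √(t - τ)) (Ioo 0 t)) :
    halfIntegral (fun τ => h τ + k τ) t = halfIntegral h t + halfIntegral k t := by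
  simp only [halfIntegral, add_div, integral_add hh hk, mul_add]

theorem halfIntegral_const_mul (a : ℝ) (h : ℝ → ℝ) (t : ℝ) :
    halfIntegral (fun τ => a * h τ) t = a * halfIntegral h t := by
  simp only [halfIntegral, mul_div_assoc, integral_const_mul]
  ring

theorem norm_halfIntegral_le {h : ℝ → ℝ} {t C : ℝ} (ht : 0 ≤ t) (hC : ∀ τ ∈ Ioo 0 t, ‖h τ‖ ≤ C) :
    ‖halfIntegral h t‖ ≤ (Real.Gamma (1 / 2))⁻¹ * (C * (2 * √t)) := by
  have hΓ : 0 < Real.Gamma (1 / 2) := Real.Gamma_pos_of_pos (by norm_num)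
  obtain ⟨hi, hval⟩ := integrableOn_inv_sqrt_sub_and_integral_eq ht
  rw [halfIntegral, norm_mul, Real.norm_of_nonneg (inv_pos.2 hΓ).le, ← hval, ← integral_const_mul]
  gcongr
  refine norm_integral_le_of_norm_le (hi.const_mul C) ?_
  filter_upwards [ae_restrict_mem measurableSet_Ioo] with τ hτ
  rw [norm_div, Real.norm_of_nonneg (Real.sqrt_nonneg _), div_eq_mul_inv]
  gcongr
  exact hC τ hτ

theorem tendsto_halfIntegral_zero {h : ℝ → ℝ} {T C : ℝ} (hT : 0 < T)
    (hC : ∀ τ ∈ Ioo 0 T, ‖h τ‖ ≤ C) : Tendsto (halfIntegral h) (𝓝[>] 0) (𝓝 0) := by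
  have hbound : Tendsto (fun t => (Real.Gamma (1 / 2))⁻¹ * (C * (2 * √t))) (𝓝[>] 0) (𝓝 0) := by
    refine (Continuous.tendsto' (by fun_prop) 0 0 (by simp)).mono_left nhdsWithin_le_nhds
  refine squeeze_zero_norm' ?_ hbound
  filter_upwards [Ioo_mem_nhdsGT hT] with t ht
  exact norm_halfIntegral_le ht.1.le fun τ hτ => hC τ ⟨hτ.1, hτ.2.trans ht.2⟩

theorem halfIntegral_eq_sqrt_mul (h : ℝ → ℝ) {t : ℝ} (ht : 0 < t) :
    halfIntegral h t =
      (Real.Gamma (1 / 2))⁻¹ * (√t * ∫ s in Ioo (0 : ℝ) 1, h (t * s) / √(1 - s)) := by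
  have hscale : ∫ τ in (0 : ℝ)..t, h τ / √(t - τ) =
      t * ∫ s in (0 : ℝ)..1, h (t * s) / √(t - t * s) := by
    simpa using (intervalIntegral.mul_integral_comp_mul_left (a := 0) (b := 1) (c := t)
      (f := fun τ => h τ / √(t - τ))).symm
  rw [halfIntegral, ← integral_Ioc_eq_integral_Ioo, ← integral_Ioc_eq_integral_Ioo,
    ← intervalIntegral.integral_of_le ht.le, ← intervalIntegral.integral_of_le zero_le_one,
    hscale, ← intervalIntegral.integral_const_mul t, ← intervalIntegral.integral_const_mul (√t)]
  congr 1
  refine intervalIntegral.integral_congr fun s _ => ?_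
  have hinv : t * (√t)⁻¹ = √t := by rw [← div_eq_mul_inv, Real.div_sqrt]
  simp only [div_eq_mul_inv]
  rw [show t - t * s = t * (1 - s) by ring, Real.sqrt_mul ht.le, mul_inv]
  linear_combination h (t * s) * (√(1 - s))⁻¹ * hinv

theorem setIntegral_div_sqrt_sub_of_le (h : ℝ → ℝ) {s t : ℝ} (hst : s ≤ t) :
    ∫ τ in Ioo 0 t, h τ / √(s - τ) = ∫ τ in Ioo 0 s, h τ / √(s - τ) := by
  refine setIntegral_eq_of_subset_of_forall_sdiff_eq_zero measurableSet_Ioo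
    (Ioo_subset_Ioo_right hst) fun τ hτ => ?_
  have hsτ : s ≤ τ := not_lt.1 fun hlt => hτ.2 ⟨hτ.1.1, hlt⟩
  rw [Real.sqrt_eq_zero_of_nonpos (sub_nonpos.2 hsτ), div_zero]

theorem integrableOn_inv_sqrt_mul_inv_sqrt_and_integral_eq {τ t : ℝ} (hτt : τ < t) :
    IntegrableOn (fun s => (√(s - τ))⁻¹ * (√(t - s))⁻¹) (Ioo τ t) ∧
      ∫ s in Ioo τ t, (√(s - τ))⁻¹ * (√(t - s))⁻¹ = Real.pi := by
  have htτ : 0 < t - τ := sub_pos.2 hτt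
  have hd : ∀ s ∈ Ioo τ t, HasDerivAt (fun s => Real.arcsin (2 * (s - τ) / (t - τ) - 1))
      ((√(s - τ))⁻¹ * (√(t - s))⁻¹) s := by
    intro s hs
    have hsτ : 0 < s - τ := sub_pos.2 hs.1
    have hts : 0 < t - s := sub_pos.2 hs.2
    have hlin : HasDerivAt (fun s => 2 * (s - τ) / (t - τ) - 1) (2 / (t - τ)) s := by
      simpa using ((((hasDerivAt_id s).sub_const τ).const_mul 2).div_const (t - τ)).sub_const 1
    have hne_neg : 2 * (s - τ) / (t - τ) - 1 ≠ -1 := by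
      have : 0 < 2 * (s - τ) / (t - τ) := by positivity
      linarith
    have hne_one : 2 * (s - τ) / (t - τ) - 1 ≠ 1 := by
      have : 2 * (s - τ) / (t - τ) < 2 := by rw [div_lt_iff₀ htτ]; linarith
      linarith
    refine ((Real.hasDerivAt_arcsin hne_neg hne_one).comp s hlin).congr_deriv ?_
    have hfactor : 1 - (2 * (s - τ) / (t - τ) - 1) ^ 2 =
        (2 / (t - τ)) ^ 2 * ((s - τ) * (t - s)) := by field_simp; ring
    rw [hfactor, Real.sqrt_mul (by positivity), Real.sqrt_sq (by positivity),
      Real.sqrt_mul hsτ.le]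
    field_simp
  have hc : ContinuousOn (fun s => Real.arcsin (2 * (s - τ) / (t - τ) - 1)) (Icc τ t) :=
    (Real.continuous_arcsin.comp (by fun_prop)).continuousOn
  obtain ⟨hi, hval⟩ := integrableOn_Ioo_and_integral_eq_sub_of_hasDerivAt hτt.le hc hd
    fun s _ => by positivity
  refine ⟨hi, hval.trans ?_⟩
  rw [mul_div_assoc, div_self htτ.ne', sub_self, mul_zero, zero_div, zero_sub, Real.arcsin_neg]
  norm_num

theorem integrableOn_abelKernel_and_integral_eq {τ t : ℝ} (hτ : τ ∈ Ioo 0 t) :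
    IntegrableOn (fun s => (√(s - τ))⁻¹ * (√(t - s))⁻¹) (Ioo 0 t) ∧
      ∫ s in Ioo 0 t, (√(s - τ))⁻¹ * (√(t - s))⁻¹ = Real.pi := by
  obtain ⟨hi, hval⟩ := integrableOn_inv_sqrt_mul_inv_sqrt_and_integral_eq hτ.2
  have hzero : ∀ s ∈ Ioo 0 t \ Ioo τ t, (√(s - τ))⁻¹ * (√(t - s))⁻¹ = 0 := by
    intro s hs
    have hsτ : s ≤ τ := not_lt.1 fun hlt => hs.2 ⟨hlt, hs.1.2⟩
    rw [Real.sqrt_eq_zero_of_nonpos (sub_nonpos.2 hsτ), inv_zero, zero_mul]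
  exact ⟨hi.of_forall_sdiff_eq_zero measurableSet_Ioo hzero,
    (setIntegral_eq_of_subset_of_forall_sdiff_eq_zero measurableSet_Ioo
      (Ioo_subset_Ioo_left hτ.1.le) hzero).trans hval⟩

theorem integrable_mul_abelKernel {h : ℝ → ℝ} {t : ℝ} (hh : IntegrableOn h (Ioo 0 t)) :
    Integrable (fun q : ℝ × ℝ => h q.2 * ((√(q.1 - q.2))⁻¹ * (√(t - q.1))⁻¹))
      ((volume.restrict (Ioo 0 t)).prod (volume.restrict (Ioo 0 t))) := by
  have hkernel : Measurable fun q : ℝ × ℝ => (√(q.1 - q.2))⁻¹ * (√(t - q.1))⁻¹ := by fun_prop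
  have hm : AEStronglyMeasurable
      (fun q : ℝ × ℝ => h q.2 * ((√(q.1 - q.2))⁻¹ * (√(t - q.1))⁻¹))
      ((volume.restrict (Ioo 0 t)).prod (volume.restrict (Ioo 0 t))) :=
    hh.aestronglyMeasurable.comp_snd.mul hkernel.aestronglyMeasurable
  rw [integrable_prod_iff' hm]
  constructor
  · filter_upwards [ae_restrict_mem measurableSet_Ioo] with τ hτ
    exact (integrableOn_abelKernel_and_integral_eq hτ).1.const_mul _
  · refine (hh.norm.mul_const Real.pi).congr ?_
    filter_upwards [ae_restrict_mem measurableSet_Ioo] with τ hτ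
    simp only [norm_mul, norm_inv, Real.norm_of_nonneg (Real.sqrt_nonneg _)]
    rw [integral_const_mul, (integrableOn_abelKernel_and_integral_eq hτ).2]

theorem halfIntegral_halfIntegral {h : ℝ → ℝ} {t : ℝ} (hh : IntegrableOn h (Ioo 0 t)) :
    halfIntegral (halfIntegral h) t = ∫ τ in Ioo 0 t, h τ := by
  have hΓ : (Real.Gamma (1 / 2))⁻¹ * (Real.Gamma (1 / 2))⁻¹ * Real.pi = 1 := by
    rw [Real.Gamma_one_half_eq, ← mul_inv, Real.mul_self_sqrt Real.pi_pos.le,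
      inv_mul_cancel₀ Real.pi_ne_zero]
  have hinner : ∀ s ∈ Ioo 0 t, halfIntegral h s / √(t - s) = (Real.Gamma (1 / 2))⁻¹ *
      ∫ τ in Ioo 0 t, h τ * ((√(s - τ))⁻¹ * (√(t - s))⁻¹) := by
    intro s hs
    rw [halfIntegral, ← setIntegral_div_sqrt_sub_of_le h hs.2.le]
    simp only [div_eq_mul_inv, ← mul_assoc, integral_mul_const]
  have hswap : ∫ s in Ioo 0 t, ∫ τ in Ioo 0 t, h τ * ((√(s - τ))⁻¹ * (√(t - s))⁻¹) =
      Real.pi * ∫ τ in Ioo 0 t, h τ := by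
    rw [integral_integral_swap (integrable_mul_abelKernel hh), ← integral_const_mul]
    refine setIntegral_congr_fun measurableSet_Ioo fun τ hτ => ?_
    simp only [integral_const_mul]
    rw [(integrableOn_abelKernel_and_integral_eq hτ).2, mul_comm]
  rw [halfIntegral, setIntegral_congr_fun measurableSet_Ioo hinner, integral_const_mul, hswap]
  linear_combination (∫ τ in Ioo 0 t, h τ) * hΓ

/-- Bounded continuous real functions on a set of times. The half-order integral preserves this
class on `(0, T)`, where no regularity up to the endpoints is needed. -/
structure IsBoundedContinuousOn (h : ℝ → ℝ) (s : Set ℝ) : Prop where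
  continuousOn : ContinuousOn h s
  exists_norm_le : ∃ C, ∀ t ∈ s, ‖h t‖ ≤ C

theorem IsBoundedContinuousOn.add {h k : ℝ → ℝ} {s : Set ℝ} (hh : IsBoundedContinuousOn h s)
    (hk : IsBoundedContinuousOn k s) : IsBoundedContinuousOn (fun t => h t + k t) s := by
  obtain ⟨C, hC⟩ := hh.exists_norm_le
  obtain ⟨D, hD⟩ := hk.exists_norm_le
  exact ⟨hh.continuousOn.add hk.continuousOn, C + D,
    fun t ht => norm_add_le_of_le (hC t ht) (hD t ht)⟩

theorem IsBoundedContinuousOn.const_mul {h : ℝ → ℝ} {s : Set ℝ} (hh : IsBoundedContinuousOn h s)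
    (a : ℝ) : IsBoundedContinuousOn (fun t => a * h t) s := by
  obtain ⟨C, hC⟩ := hh.exists_norm_le
  exact ⟨continuousOn_const.mul hh.continuousOn, ‖a‖ * C,
    fun t ht => norm_mul_le_of_le le_rfl (hC t ht)⟩

theorem IsBoundedContinuousOn.congr {h k : ℝ → ℝ} {s : Set ℝ} (hh : IsBoundedContinuousOn h s)
    (hkh : EqOn k h s) : IsBoundedContinuousOn k s := by
  obtain ⟨C, hC⟩ := hh.exists_norm_le
  exact ⟨hh.continuousOn.congr hkh, C, fun t ht => (hkh ht).symm ▸ hC t ht⟩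

theorem IsBoundedContinuousOn.mono {h : ℝ → ℝ} {r s : Set ℝ} (hh : IsBoundedContinuousOn h s)
    (hrs : r ⊆ s) : IsBoundedContinuousOn h r := by
  obtain ⟨C, hC⟩ := hh.exists_norm_le
  exact ⟨hh.continuousOn.mono hrs, C, fun t ht => hC t (hrs ht)⟩

theorem IsBoundedContinuousOn.integrableOn_Ioo {h : ℝ → ℝ} {a b : ℝ}
    (hh : IsBoundedContinuousOn h (Ioo a b)) : IntegrableOn h (Ioo a b) := by
  obtain ⟨C, hC⟩ := hh.exists_norm_le
  exact IntegrableOn.of_bound measure_Ioo_lt_top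
    (hh.continuousOn.aestronglyMeasurable measurableSet_Ioo) C
    ((ae_restrict_mem measurableSet_Ioo).mono hC)

theorem IsBoundedContinuousOn.integrableOn_div_sqrt_sub {h : ℝ → ℝ} {t : ℝ}
    (hh : IsBoundedContinuousOn h (Ioo 0 t)) :
    IntegrableOn (fun τ => h τ / √(t - τ)) (Ioo 0 t) := by
  obtain ⟨C, hC⟩ := hh.exists_norm_le
  exact _root_.integrableOn_div_sqrt_sub
    (hh.continuousOn.aestronglyMeasurable measurableSet_Ioo) hC

theorem IsBoundedContinuousOn.halfIntegral {h : ℝ → ℝ} {T : ℝ}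
    (hh : IsBoundedContinuousOn h (Ioo 0 T)) :
    IsBoundedContinuousOn (halfIntegral h) (Ioo 0 T) := by
  obtain ⟨C, hC⟩ := hh.exists_norm_le
  have hscale : ∀ t ∈ Ioo 0 T, ∀ s ∈ Ioo (0 : ℝ) 1, t * s ∈ Ioo 0 T := fun t ht s hs =>
    ⟨mul_pos ht.1 hs.1, (mul_le_of_le_one_right ht.1.le hs.2.le).trans_lt ht.2⟩
  have hint : ContinuousOn (fun t => ∫ s in Ioo (0 : ℝ) 1, h (t * s) / √(1 - s)) (Ioo 0 T) := by
    refine continuousOn_of_dominated (bound := fun s => C * (√(1 - s))⁻¹) (fun t ht => ?_)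
      (fun t ht => ?_) ((integrableOn_inv_sqrt_sub 1).const_mul C) ?_
    · have hcomp : ContinuousOn (fun s => h (t * s)) (Ioo 0 1) :=
        hh.continuousOn.comp (by fun_prop) (hscale t ht)
      exact (hcomp.aestronglyMeasurable measurableSet_Ioo).div₀
        (by fun_prop : Measurable fun s : ℝ => √(1 - s)).aestronglyMeasurable
    · filter_upwards [ae_restrict_mem measurableSet_Ioo] with s hs
      rw [norm_div, Real.norm_of_nonneg (Real.sqrt_nonneg _), div_eq_mul_inv]
      gcongr
      exact hC _ (hscale t ht s hs)
    · filter_upwards [ae_restrict_mem measurableSet_Ioo] with s hs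
      exact (hh.continuousOn.comp (by fun_prop) fun t ht => hscale t ht s hs).div_const _
  refine ⟨ContinuousOn.congr ?_ fun t ht => halfIntegral_eq_sqrt_mul h ht.1,
    (Real.Gamma (1 / 2))⁻¹ * (C * (2 * √T)), fun t ht => ?_⟩
  · exact continuousOn_const.mul (Real.continuous_sqrt.continuousOn.mul hint)
  · refine (norm_halfIntegral_le ht.1.le fun τ hτ => hC τ ⟨hτ.1, hτ.2.trans ht.2⟩).trans ?_
    have hC₀ : 0 ≤ C := (norm_nonneg _).trans (hC t ht)
    gcongr
    exact ht.2.le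

theorem IsBoundedContinuousOn.hasDerivAt_setIntegral {h : ℝ → ℝ} {T t : ℝ}
    (hh : IsBoundedContinuousOn h (Ioo 0 T)) (ht : t ∈ Ioo 0 T) :
    HasDerivAt (fun r => ∫ τ in Ioo 0 r, h τ) (h t) t := by
  have hnhds : Ioo 0 T ∈ 𝓝 t := isOpen_Ioo.mem_nhds ht
  have hi : IntervalIntegrable h volume 0 t := by
    rw [intervalIntegrable_iff_integrableOn_Ioo_of_le ht.1.le]
    exact (hh.mono (Ioo_subset_Ioo_right ht.2.le)).integrableOn_Ioo
  refine (intervalIntegral.integral_hasDerivAt_right hi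
    (hh.continuousOn.stronglyMeasurableAtFilter isOpen_Ioo t ht)
    (hh.continuousOn.continuousAt hnhds)).congr_of_eventuallyEq ?_
  filter_upwards [hnhds] with r hr
  rw [intervalIntegral.integral_of_le hr.1.le, integral_Ioc_eq_integral_Ioo]

theorem eqOn_of_halfIntegral_eqOn {h k : ℝ → ℝ} {T : ℝ} (hh : IsBoundedContinuousOn h (Ioo 0 T))
    (hk : IsBoundedContinuousOn k (Ioo 0 T))
    (hhk : EqOn (halfIntegral h) (halfIntegral k) (Ioo 0 T)) : EqOn h k (Ioo 0 T) := by
  intro t ht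
  refine (hh.hasDerivAt_setIntegral ht).unique
    ((hk.hasDerivAt_setIntegral ht).congr_of_eventuallyEq ?_)
  filter_upwards [isOpen_Ioo.mem_nhds ht] with r hr
  have hsub : Ioo 0 r ⊆ Ioo 0 T := Ioo_subset_Ioo_right hr.2.le
  rw [← halfIntegral_halfIntegral (hh.mono hsub).integrableOn_Ioo,
    ← halfIntegral_halfIntegral (hk.mono hsub).integrableOn_Ioo]
  exact halfIntegral_congr (hhk.mono hsub)

theorem setIntegral_deriv_eq_of_tendsto_zero {g : ℝ → ℝ} {T t : ℝ}
    (hg : DifferentiableOn ℝ g (Ioo 0 T)) (hg' : IsBoundedContinuousOn (deriv g) (Ioo 0 T))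
    (hg₀ : Tendsto g (𝓝[>] 0) (𝓝 0)) (ht : t ∈ Ioo 0 T) :
    ∫ τ in Ioo 0 t, deriv g τ = g t := by
  have hsub : Ioo 0 t ⊆ Ioo 0 T := Ioo_subset_Ioo_right ht.2.le
  have hd : ∀ τ ∈ Ioo 0 T, HasDerivAt g (deriv g τ) τ := fun τ hτ =>
    (hg.differentiableAt (isOpen_Ioo.mem_nhds hτ)).hasDerivAt
  have hi : IntervalIntegrable (deriv g) volume 0 t := by
    rw [intervalIntegrable_iff_integrableOn_Ioo_of_le ht.1.le]
    exact (hg'.mono hsub).integrableOn_Ioo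
  have hFTC := intervalIntegral.integral_eq_sub_of_hasDerivAt_of_tendsto ht.1
    (fun τ hτ => hd τ (hsub hτ)) hi hg₀ ((hd t ht).continuousAt.mono_left nhdsWithin_le_nhds)
  rwa [intervalIntegral.integral_of_le ht.1.le, integral_Ioc_eq_integral_Ioo, sub_zero] at hFTC

theorem caputoHalf_caputoHalf {f : ℝ → ℝ} {T t : ℝ}
    (hf : IsBoundedContinuousOn (deriv f) (Ioo 0 T))
    (hDf : DifferentiableOn ℝ (caputoHalf f) (Ioo 0 T))
    (hDf' : IsBoundedContinuousOn (deriv (caputoHalf f)) (Ioo 0 T)) (ht : t ∈ Ioo 0 T) :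
    caputoHalf (caputoHalf f) t = deriv f t := by
  obtain ⟨C, hC⟩ := hf.exists_norm_le
  have hzero : Tendsto (caputoHalf f) (𝓝[>] 0) (𝓝 0) :=
    tendsto_halfIntegral_zero (ht.1.trans ht.2) hC
  refine (eqOn_of_halfIntegral_eqOn hf hDf'.halfIntegral (fun s hs => ?_) ht).symm
  rw [halfIntegral_halfIntegral (hDf'.mono (Ioo_subset_Ioo_right hs.2.le)).integrableOn_Ioo,
    setIntegral_deriv_eq_of_tendsto_zero hDf hDf' hzero hs, caputoHalf_eq_halfIntegral]

theorem caputoHalf_congr {f g : ℝ → ℝ} {t : ℝ} (hfg : EqOn f g (Ioo 0 t)) :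
    caputoHalf f t = caputoHalf g t :=
  halfIntegral_congr (hfg.deriv isOpen_Ioo)

theorem caputoHalf_add {f g : ℝ → ℝ} {t : ℝ} (hf : DifferentiableOn ℝ f (Ioo 0 t))
    (hf' : IsBoundedContinuousOn (deriv f) (Ioo 0 t)) (hg : DifferentiableOn ℝ g (Ioo 0 t))
    (hg' : IsBoundedContinuousOn (deriv g) (Ioo 0 t)) :
    caputoHalf (fun τ => f τ + g τ) t = caputoHalf f t + caputoHalf g t := by
  simp only [caputoHalf_eq_halfIntegral]
  rw [← halfIntegral_add hf'.integrableOn_div_sqrt_sub hg'.integrableOn_div_sqrt_sub]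
  exact halfIntegral_congr fun τ hτ => deriv_fun_add
    (hf.differentiableAt (isOpen_Ioo.mem_nhds hτ)) (hg.differentiableAt (isOpen_Ioo.mem_nhds hτ))

theorem halfIntegral_integral {Λ : Type*} [MeasurableSpace Λ] {ν : Measure Λ} [SFinite ν]
    {g : Λ → ℝ → ℝ} {t : ℝ}
    (hg : Integrable (fun q : Λ × ℝ => g q.1 q.2 / √(t - q.2))
      (ν.prod (volume.restrict (Ioo 0 t)))) :
    halfIntegral (fun τ => ∫ v, g v τ ∂ν) t = ∫ v, halfIntegral (g v) t ∂ν := by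
  simp only [halfIntegral, integral_const_mul, ← integral_div]
  rw [integral_integral_swap (f := fun τ v => g v τ / √(t - τ)) hg.swap]

end HalfIntegral

section PartialDerivatives

variable {U : ℝ × ℝ → ℝ} {q : ℝ × ℝ}

theorem hasDerivAt_fst_of_differentiableAt (hU : DifferentiableAt ℝ U q) :
    HasDerivAt (fun y => U (y, q.2)) (fderiv ℝ U q (1, 0)) q.1 :=
  hU.hasFDerivAt.comp_hasDerivAt q.1 ((hasDerivAt_id q.1).prodMk (hasDerivAt_const q.1 q.2))

theorem hasDerivAt_snd_of_differentiableAt (hU : DifferentiableAt ℝ U q) :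
    HasDerivAt (fun τ => U (q.1, τ)) (fderiv ℝ U q (0, 1)) q.2 :=
  hU.hasFDerivAt.comp_hasDerivAt q.2 ((hasDerivAt_const q.2 q.1).prodMk (hasDerivAt_id q.2))

theorem eventually_differentiableAt_of_contDiffAt {n : ℕ} (hU : ContDiffAt ℝ (n + 1) U q) :
    ∀ᶠ r in 𝓝 q, DifferentiableAt ℝ U r := by
  filter_upwards [hU.eventually (by exact_mod_cast ENat.natCast_ne_top (n + 1))] with r hr
  exact hr.differentiableAt (by simp)

theorem eventuallyEq_deriv_fst (hU : ∀ᶠ r in 𝓝 q, DifferentiableAt ℝ U r) :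
    (fun r : ℝ × ℝ => deriv (fun y => U (y, r.2)) r.1) =ᶠ[𝓝 q] fun r => fderiv ℝ U r (1, 0) :=
  hU.mono fun _ hr => (hasDerivAt_fst_of_differentiableAt hr).deriv

theorem eventuallyEq_deriv_snd (hU : ∀ᶠ r in 𝓝 q, DifferentiableAt ℝ U r) :
    (fun r : ℝ × ℝ => deriv (fun τ => U (r.1, τ)) r.2) =ᶠ[𝓝 q] fun r => fderiv ℝ U r (0, 1) :=
  hU.mono fun _ hr => (hasDerivAt_snd_of_differentiableAt hr).deriv

theorem contDiffAt_deriv_fst {n : ℕ} (hU : ContDiffAt ℝ (n + 1) U q) :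
    ContDiffAt ℝ n (fun r : ℝ × ℝ => deriv (fun y => U (y, r.2)) r.1) q :=
  ((hU.fderiv_right le_rfl).clm_apply contDiffAt_const).congr_of_eventuallyEq
    (eventuallyEq_deriv_fst (eventually_differentiableAt_of_contDiffAt hU))

theorem contDiffAt_deriv_snd {n : ℕ} (hU : ContDiffAt ℝ (n + 1) U q) :
    ContDiffAt ℝ n (fun r : ℝ × ℝ => deriv (fun τ => U (r.1, τ)) r.2) q :=
  ((hU.fderiv_right le_rfl).clm_apply contDiffAt_const).congr_of_eventuallyEq
    (eventuallyEq_deriv_snd (eventually_differentiableAt_of_contDiffAt hU))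

theorem deriv_snd_deriv_fst_eq (hU : ContDiffAt ℝ 2 U q) :
    deriv (fun τ => deriv (fun y => U (y, τ)) q.1) q.2 =
      deriv (fun y => deriv (fun τ => U (y, τ)) q.2) q.1 := by
  have hev := eventually_differentiableAt_of_contDiffAt (n := 1) (by exact_mod_cast hU)
  have hdiff : DifferentiableAt ℝ (fderiv ℝ U) q :=
    (hU.fderiv_right (m := 1) le_rfl).differentiableAt one_ne_zero
  have happly (e : ℝ × ℝ) : HasFDerivAt (fun r => fderiv ℝ U r e)
      ((fderiv ℝ (fderiv ℝ U) q).flip e) q := by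
    simpa using hdiff.hasFDerivAt.clm_apply (hasFDerivAt_const e q)
  have hfst := (happly (1, 0)).congr_of_eventuallyEq (eventuallyEq_deriv_fst hev)
  have hsnd := (happly (0, 1)).congr_of_eventuallyEq (eventuallyEq_deriv_snd hev)
  rw [(hasDerivAt_snd_of_differentiableAt hfst.differentiableAt).deriv,
    (hasDerivAt_fst_of_differentiableAt hsnd.differentiableAt).deriv, hfst.fderiv, hsnd.fderiv]
  exact (hU.isSymmSndFDerivAt (by simp)).eq (0, 1) (1, 0)

end PartialDerivatives

section RegularFamilies

theorem aestronglyMeasurable_deriv_of_ae_differentiableAt {α : Type*} [MeasurableSpace α]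
    {μ : Measure α} {f : α → ℝ → ℝ} {a : α → ℝ}
    (hf : ∀ᶠ h in 𝓝 (0 : ℝ), AEStronglyMeasurable (fun q => f q (a q + h)) μ)
    (hd : ∀ᵐ q ∂μ, DifferentiableAt ℝ (f q) (a q)) :
    AEStronglyMeasurable (fun q => deriv (f q) (a q)) μ := by
  obtain ⟨h, hh, hm⟩ := exists_seq_forall_of_frequently
    ((hf.filter_mono nhdsWithin_le_nhds).frequently : ∃ᶠ h in 𝓝[≠] (0 : ℝ), _)
  have hm₀ : AEStronglyMeasurable (fun q => f q (a q)) μ := by simpa using hf.self_of_nhds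
  refine aestronglyMeasurable_of_tendsto_ae atTop
    (f := fun n q => (h n)⁻¹ • (f q (a q + h n) - f q (a q)))
    (fun n => ((hm n).sub hm₀).const_smul (h n)⁻¹) ?_
  filter_upwards [hd] with q hq
  exact hq.hasDerivAt.tendsto_slope_zero.comp hh

variable {Λ : Type*} [MeasurableSpace Λ]

/-- A family of real functions `w s` on the measure space `(Λ, ν)`, with parameter `s ∈ S`, that
may be differentiated under integrals over `ν`: it is measurable in `Λ`, differentiable in `s`, and
both it and its derivative are bounded by `M` on the set `V`, which in applications carries `ν`. -/
structure IsRegularFamily (ν : Measure Λ) (V : Set Λ) (S : Set ℝ) (M : ℝ) (w : ℝ → Λ → ℝ) :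
    Prop where
  aestronglyMeasurable : ∀ s ∈ S, AEStronglyMeasurable (w s) ν
  differentiableAt : ∀ s ∈ S, ∀ v ∈ V, DifferentiableAt ℝ (fun r => w r v) s
  norm_le : ∀ s ∈ S, ∀ v ∈ V, ‖w s v‖ ≤ M
  norm_deriv_le : ∀ s ∈ S, ∀ v ∈ V, ‖deriv (fun r => w r v) s‖ ≤ M

variable {ν : Measure Λ} {V : Set Λ} {S : Set ℝ} {A B M s : ℝ} {w z : ℝ → Λ → ℝ} {k : Λ → ℝ}

theorem IsRegularFamily.mul (hw : IsRegularFamily ν V S A w) (hz : IsRegularFamily ν V S B z) :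
    IsRegularFamily ν V S (A * B + A * B) (fun s v => w s v * z s v) where
  aestronglyMeasurable s hs := (hw.aestronglyMeasurable s hs).mul (hz.aestronglyMeasurable s hs)
  differentiableAt s hs v hv := (hw.differentiableAt s hs v hv).mul (hz.differentiableAt s hs v hv)
  norm_le s hs v hv := by
    have h := norm_mul_le_of_le (hw.norm_le s hs v hv) (hz.norm_le s hs v hv)
    linarith [norm_nonneg (w s v * z s v)]
  norm_deriv_le s hs v hv := by
    rw [deriv_fun_mul (hw.differentiableAt s hs v hv) (hz.differentiableAt s hs v hv)]
    exact norm_add_le_of_le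
      (norm_mul_le_of_le (hw.norm_deriv_le s hs v hv) (hz.norm_le s hs v hv))
      (norm_mul_le_of_le (hw.norm_le s hs v hv) (hz.norm_deriv_le s hs v hv))

theorem IsRegularFamily.aestronglyMeasurable_deriv (hw : IsRegularFamily ν V S M w)
    (hS : IsOpen S) (hV : ∀ᵐ v ∂ν, v ∈ V) (hs : s ∈ S) :
    AEStronglyMeasurable (fun v => deriv (fun r => w r v) s) ν := by
  refine aestronglyMeasurable_deriv_of_ae_differentiableAt (f := fun v r => w r v) ?_
    (hV.mono fun v hv => hw.differentiableAt s hs v hv)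
  have hmem : ∀ᶠ h in 𝓝 (0 : ℝ), s + h ∈ S :=
    (by fun_prop : Continuous fun h => s + h).continuousAt.eventually_mem
      (hS.mem_nhds (by simpa using hs))
  exact hmem.mono fun h hh => hw.aestronglyMeasurable _ hh

theorem IsRegularFamily.integrable_mul (hw : IsRegularFamily ν V S M w) (hV : ∀ᵐ v ∂ν, v ∈ V)
    (hk : Integrable k ν) (hs : s ∈ S) : Integrable (fun v => w s v * k v) ν :=
  hk.bdd_mul (hw.aestronglyMeasurable s hs) (hV.mono fun v hv => hw.norm_le s hs v hv)

theorem IsRegularFamily.hasDerivAt_integral_mul (hw : IsRegularFamily ν V S M w)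
    (hS : IsOpen S) (hV : ∀ᵐ v ∂ν, v ∈ V) (hk : Integrable k ν) (hs : s ∈ S) :
    HasDerivAt (fun r => ∫ v, w r v * k v ∂ν) (∫ v, deriv (fun r => w r v) s * k v ∂ν) s := by
  have hnhds : S ∈ 𝓝 s := hS.mem_nhds hs
  refine (hasDerivAt_integral_of_dominated_loc_of_deriv_le (bound := fun v => M * ‖k v‖)
    (F' := fun r v => deriv (fun r => w r v) r * k v) hnhds ?_ (hw.integrable_mul hV hk hs)
    ((hw.aestronglyMeasurable_deriv hS hV hs).mul hk.aestronglyMeasurable) ?_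
    (hk.norm.const_mul M) ?_).2
  · filter_upwards [hnhds] with r hr
    exact (hw.aestronglyMeasurable r hr).mul hk.aestronglyMeasurable
  · filter_upwards [hV] with v hv r hr
    exact norm_mul_le_of_le (hw.norm_deriv_le r hr v hv) le_rfl
  · filter_upwards [hV] with v hv r hr
    exact (hw.differentiableAt r hr v hv).hasDerivAt.mul_const (k v)

theorem IsRegularFamily.integrable [IsFiniteMeasure ν] (hw : IsRegularFamily ν V S M w)
    (hV : ∀ᵐ v ∂ν, v ∈ V) (hs : s ∈ S) : Integrable (w s) ν := by
  simpa using hw.integrable_mul hV (integrable_const (1 : ℝ)) hs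

theorem IsRegularFamily.integrable_deriv [IsFiniteMeasure ν] (hw : IsRegularFamily ν V S M w)
    (hS : IsOpen S) (hV : ∀ᵐ v ∂ν, v ∈ V) (hs : s ∈ S) :
    Integrable (fun v => deriv (fun r => w r v) s) ν :=
  .of_bound (hw.aestronglyMeasurable_deriv hS hV hs) M
    (hV.mono fun v hv => hw.norm_deriv_le s hs v hv)

theorem IsRegularFamily.hasDerivAt_integral [IsFiniteMeasure ν] (hw : IsRegularFamily ν V S M w)
    (hS : IsOpen S) (hV : ∀ᵐ v ∂ν, v ∈ V) (hs : s ∈ S) :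
    HasDerivAt (fun r => ∫ v, w r v ∂ν) (∫ v, deriv (fun r => w r v) s ∂ν) s := by
  simpa using hw.hasDerivAt_integral_mul hS hV (integrable_const (1 : ℝ)) hs

theorem IsRegularFamily.hasDerivAt_halfIntegral {t x : ℝ} {w : ℝ → ℝ → ℝ}
    (hw : IsRegularFamily (volume.restrict (Ioo 0 t)) (Ioo 0 t) S M w) (hS : IsOpen S)
    (hx : x ∈ S) :
    HasDerivAt (fun y => halfIntegral (w y) t)
      (halfIntegral (fun τ => deriv (fun y => w y τ) x) t) x := by
  simp only [halfIntegral, div_eq_mul_inv]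
  exact (hw.hasDerivAt_integral_mul hS (ae_restrict_mem measurableSet_Ioo)
    (integrableOn_inv_sqrt_sub t) hx).const_mul _

theorem isBoundedContinuousOn_integral_mul {g : Λ → ℝ → ℝ} (hV : ∀ᵐ v ∂ν, v ∈ V)
    (hk : Integrable k ν) (hm : ∀ t ∈ S, AEStronglyMeasurable (fun v => g v t) ν)
    (hc : ∀ v ∈ V, ContinuousOn (g v) S) (hb : ∀ t ∈ S, ∀ v ∈ V, ‖g v t‖ ≤ M) :
    IsBoundedContinuousOn (fun t => ∫ v, k v * g v t ∂ν) S := by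
  have hbound : ∀ t ∈ S, ∀ᵐ v ∂ν, ‖k v * g v t‖ ≤ ‖k v‖ * M := fun t ht =>
    hV.mono fun v hv => norm_mul_le_of_le le_rfl (hb t ht v hv)
  exact
    { continuousOn := continuousOn_of_dominated
        (fun t ht => hk.aestronglyMeasurable.mul (hm t ht)) hbound (hk.norm.mul_const M)
        (hV.mono fun v hv => continuousOn_const.mul (hc v hv))
      exists_norm_le := ⟨∫ v, ‖k v‖ * M ∂ν, fun t ht =>
        norm_integral_le_of_norm_le (hk.norm.mul_const M) (hbound t ht)⟩ }

theorem integrable_prod_mul_div_sqrt_sub {g : Λ → ℝ → ℝ} {t : ℝ}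
    (hV : ∀ᵐ v ∂ν, v ∈ V) (hk : Integrable k ν)
    (hm : AEStronglyMeasurable (uncurry g) (ν.prod (volume.restrict (Ioo 0 t))))
    (hb : ∀ v ∈ V, ∀ τ ∈ Ioo 0 t, ‖g v τ‖ ≤ M) :
    Integrable (fun q : Λ × ℝ => k q.1 * g q.1 q.2 / √(t - q.2))
      (ν.prod (volume.restrict (Ioo 0 t))) := by
  refine ((hk.mul_prod (integrableOn_inv_sqrt_sub t)).bdd_mul (c := M) hm ?_).congr
    (.of_forall fun q => ?_)
  · filter_upwards [Measure.quasiMeasurePreserving_fst.ae hV,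
      Measure.quasiMeasurePreserving_snd.ae (ae_restrict_mem measurableSet_Ioo)] with q hv hτ
    exact hb _ hv _ hτ
  · simp only [uncurry, div_eq_mul_inv]
    ring

end RegularFamilies

section Transport

/-- The scattering integral `∫ p(x, v, v') w(x, v') dν(v')` of the radiative transport equation. The
measure `ν` on velocities plays the role of Lebesgue measure on `V`. -/
noncomputable def scattering (ν : Measure ℝ) (p : ℝ → ℝ → ℝ → ℝ) (w : ℝ → ℝ → ℝ) (x v : ℝ) : ℝ :=
  ∫ v', p x v v' * w x v' ∂ν

/-- The radiative transport operator `w ↦ -v ∂ₓw - σₜ w + σₛ ∫ p w`, with the sign for which the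
transport equation reads `∂ₜ^{1/2} u = transport u + F`. -/
noncomputable def transport (ν : Measure ℝ) (σt σs : ℝ → ℝ → ℝ) (p : ℝ → ℝ → ℝ → ℝ)
    (w : ℝ → ℝ → ℝ) (x v : ℝ) : ℝ :=
  -(v * deriv (fun y => w y v) x) - σt x v * w x v + σs x v * scattering ν p w x v

/-- The integrand `K(x, v, v') w(x, v')` of the integral part of the squared transport operator. -/
noncomputable def squaredKernel (ν : Measure ℝ) (σt σs : ℝ → ℝ → ℝ) (p : ℝ → ℝ → ℝ → ℝ)
    (w : ℝ → ℝ → ℝ) (x v v' : ℝ) : ℝ :=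
  -(v * deriv (fun y => σs y v * p y v v') x) * w x v'
    - σs x v * p x v v' *
        ((v + v') * deriv (fun y => w y v') x + (σt x v + σt x v') * w x v')
    + σs x v * w x v' * ∫ v'', σs x v'' * p x v v'' * p x v'' v' ∂ν

/-- The operator `w ↦ v² ∂ₓ²w + L₁ w + ∫ K w`, which `transport_transport` identifies as the square
of `transport`. -/
noncomputable def squaredTransport (ν : Measure ℝ) (σt σs : ℝ → ℝ → ℝ) (p : ℝ → ℝ → ℝ → ℝ)
    (w : ℝ → ℝ → ℝ) (x v : ℝ) : ℝ :=
  v ^ 2 * deriv (deriv (fun y => w y v)) x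
    + (2 * v * σt x v * deriv (fun y => w y v) x
        + (v * deriv (fun y => σt y v) x + (σt x v) ^ 2) * w x v)
    + ∫ v', squaredKernel ν σt σs p w x v v' ∂ν

/-- Coefficients of a transport operator over an open position domain `X` and a bounded velocity set
`V` carrying `ν`. Each is differentiable in position and, with its position derivative, bounded by
`M`, but only measurable in velocity. -/
structure IsRegularMedium (ν : Measure ℝ) (V X : Set ℝ) (M : ℝ) (σt σs : ℝ → ℝ → ℝ)
    (p : ℝ → ℝ → ℝ → ℝ) : Prop where
  isOpen : IsOpen X
  ae_mem : ∀ᵐ v ∂ν, v ∈ V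
  isBounded : Bornology.IsBounded V
  absorption : IsRegularFamily ν V X M σt
  scatteringRate : IsRegularFamily ν V X M σs
  phase : ∀ v ∈ V, IsRegularFamily ν V X M (fun x => p x v)
  phase_aestronglyMeasurable : ∀ x ∈ X, AEStronglyMeasurable (uncurry (p x)) (ν.prod ν)

variable {ν : Measure ℝ} {V X : Set ℝ} {A M x v : ℝ} {σt σs : ℝ → ℝ → ℝ} {p : ℝ → ℝ → ℝ → ℝ}
  {w z : ℝ → ℝ → ℝ}

theorem transport_congr (hV : ∀ᵐ v' ∂ν, v' ∈ V) (hX : IsOpen X) (hx : x ∈ X) (hv : v ∈ V)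
    (hwz : ∀ y ∈ X, ∀ v' ∈ V, w y v' = z y v') :
    transport ν σt σs p w x v = transport ν σt σs p z x v := by
  have hderiv : deriv (fun y => w y v) x = deriv (fun y => z y v) x :=
    Filter.EventuallyEq.deriv_eq (by filter_upwards [hX.mem_nhds hx] with y hy using hwz y hy v hv)
  have hscat : scattering ν p w x v = scattering ν p z x v :=
    integral_congr_ae (hV.mono fun v' hv' => by simp only [hwz x hx v' hv'])
  rw [transport, transport, hderiv, hscat, hwz x hx v hv]

theorem transport_sub (hw : DifferentiableAt ℝ (fun y => w y v) x)
    (hz : DifferentiableAt ℝ (fun y => z y v) x) (hpw : Integrable (fun v' => p x v v' * w x v') ν)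
    (hpz : Integrable (fun v' => p x v v' * z x v') ν) :
    transport ν σt σs p (fun y v' => w y v' - z y v') x v =
      transport ν σt σs p w x v - transport ν σt σs p z x v := by
  simp only [transport, scattering, deriv_fun_sub hw hz, mul_sub, integral_sub hpw hpz]
  ring

theorem halfIntegral_transport [SFinite ν] {g : ℝ → ℝ → ℝ → ℝ} {t : ℝ}
    (hg : IsRegularFamily (volume.restrict (Ioo 0 t)) (Ioo 0 t) X A (fun y τ => g y v τ))
    (hpg : Integrable (fun q : ℝ × ℝ => p x v q.1 * g x q.1 q.2 / √(t - q.2))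
      (ν.prod (volume.restrict (Ioo 0 t)))) (hX : IsOpen X) (hx : x ∈ X) :
    halfIntegral (fun τ => transport ν σt σs p (fun y v' => g y v' τ) x v) t =
      transport ν σt σs p (fun y v' => halfIntegral (g y v') t) x v := by
  have hi₁ := integrableOn_div_sqrt_sub (hg.aestronglyMeasurable_deriv hX
    (ae_restrict_mem measurableSet_Ioo) hx) (hg.norm_deriv_le x hx)
  have hi₂ := integrableOn_div_sqrt_sub (hg.aestronglyMeasurable x hx) (hg.norm_le x hx)
  have hi₃ : IntegrableOn (fun τ => scattering ν p (fun y v' => g y v' τ) x v / √(t - τ))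
      (Ioo 0 t) := by
    simpa only [integral_div] using! hpg.integral_prod_right
  have hlinear : halfIntegral (fun τ => transport ν σt σs p (fun y v' => g y v' τ) x v) t =
      -v * halfIntegral (fun τ => deriv (fun y => g y v τ) x) t + -σt x v * halfIntegral (g x v) t
        + σs x v * halfIntegral (fun τ => scattering ν p (fun y v' => g y v' τ) x v) t := by
    have hi₁₂ := (hi₁.const_mul (-v)).fun_add (hi₂.const_mul (-σt x v))
    have hi₃' := hi₃.const_mul (σs x v)
    simp only [← mul_div_assoc, ← add_div] at hi₁₂ hi₃'
    simp only [← halfIntegral_const_mul]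
    rw [← halfIntegral_add, ← halfIntegral_add hi₁₂ hi₃']
    · exact halfIntegral_congr fun τ _ => by simp only [transport]; ring
    all_goals simp only [mul_div_assoc]
    exacts [hi₁.const_mul _, hi₂.const_mul _]
  have hscat : halfIntegral (fun τ => scattering ν p (fun y v' => g y v' τ) x v) t =
      scattering ν p (fun y v' => halfIntegral (g y v') t) x v := by
    simp only [scattering]
    rw [halfIntegral_integral hpg]
    simp only [halfIntegral_const_mul]
  rw [hlinear, hscat, transport, (hg.hasDerivAt_halfIntegral hX hx).deriv]
  ring

namespace IsRegularMedium

variable [IsFiniteMeasure ν] (hm : IsRegularMedium ν V X M σt σs p)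
  (hw : IsRegularFamily ν V X A w) (hx : x ∈ X) (hv : v ∈ V)

include hm hw hx hv

theorem hasDerivAt_scattering :
    HasDerivAt (fun y => scattering ν p w y v) (∫ v', deriv (fun y => p y v v' * w y v') x ∂ν) x :=
  ((hm.phase v hv).mul hw).hasDerivAt_integral hm.isOpen hm.ae_mem hx

theorem hasDerivAt_transport (hw' : DifferentiableAt ℝ (deriv fun y => w y v) x) :
    HasDerivAt (fun y => transport ν σt σs p w y v)
      (-(v * deriv (deriv fun y => w y v) x)
        - (deriv (fun y => σt y v) x * w x v + σt x v * deriv (fun y => w y v) x)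
        + (deriv (fun y => σs y v) x * scattering ν p w x v
          + σs x v * ∫ v', deriv (fun y => p y v v' * w y v') x ∂ν)) x :=
  ((hw'.hasDerivAt.const_mul v).neg.sub
    ((hm.absorption.differentiableAt x hx v hv).hasDerivAt.mul
      (hw.differentiableAt x hx v hv).hasDerivAt)).add
    ((hm.scatteringRate.differentiableAt x hx v hv).hasDerivAt.mul
      (hm.hasDerivAt_scattering hw hx hv))

theorem integrable_phase_mul_streaming :
    Integrable (fun v' => p x v v' * (-(v' * deriv (fun y => w y v') x) - σt x v' * w x v')) ν := by
  obtain ⟨C, hC⟩ := hm.isBounded.exists_norm_le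
  have hderiv := hw.aestronglyMeasurable_deriv hm.isOpen hm.ae_mem hx
  have habsorb := (hm.absorption.aestronglyMeasurable x hx).mul (hw.aestronglyMeasurable x hx)
  refine .of_bound (((hm.phase v hv).aestronglyMeasurable x hx).mul
    ((aestronglyMeasurable_id.mul hderiv).neg.sub habsorb)) (M * (C * A + M * A)) ?_
  filter_upwards [hm.ae_mem] with v' hv'
  refine norm_mul_le_of_le ((hm.phase v hv).norm_le x hx v' hv') (norm_sub_le_of_le ?_ ?_)
  · rw [norm_neg]
    exact norm_mul_le_of_le (hC v' hv') (hw.norm_deriv_le x hx v' hv')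
  · exact norm_mul_le_of_le (hm.absorption.norm_le x hx v' hv') (hw.norm_le x hx v' hv')

theorem integrable_doubleScattering :
    Integrable (fun q : ℝ × ℝ => p x v q.1 * (σs x q.1 * (p x q.1 q.2 * w x q.2)))
      (ν.prod ν) := by
  refine .of_bound (((hm.phase v hv).aestronglyMeasurable x hx).comp_fst.mul
    ((hm.scatteringRate.aestronglyMeasurable x hx).comp_fst.mul
      ((hm.phase_aestronglyMeasurable x hx).mul (hw.aestronglyMeasurable x hx).comp_snd)))
    (M * (M * (M * A))) ?_
  filter_upwards [Measure.quasiMeasurePreserving_fst.ae hm.ae_mem,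
    Measure.quasiMeasurePreserving_snd.ae hm.ae_mem] with q h₁ h₂
  exact norm_mul_le_of_le ((hm.phase v hv).norm_le x hx _ h₁)
    (norm_mul_le_of_le (hm.scatteringRate.norm_le x hx _ h₁)
      (norm_mul_le_of_le ((hm.phase _ h₁).norm_le x hx _ h₂) (hw.norm_le x hx _ h₂)))

theorem integrable_phase_mul_scattering :
    Integrable (fun v' => p x v v' * (σs x v' * scattering ν p w x v')) ν := by
  simpa only [scattering, integral_const_mul] using
    (hm.integrable_doubleScattering hw hx hv).integral_prod_left

theorem integrable_mul_doubleScattering :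
    Integrable (fun v' => w x v' * ∫ v'', σs x v'' * p x v v'' * p x v'' v' ∂ν) ν := by
  refine (hm.integrable_doubleScattering hw hx hv).integral_prod_right.congr
    (.of_forall fun v' => ?_)
  simp only [← integral_const_mul]
  exact integral_congr_ae (.of_forall fun v'' => by ring)

theorem scattering_scattering :
    scattering ν p (fun y v' => σs y v' * scattering ν p w y v') x v =
      ∫ v', w x v' * ∫ v'', σs x v'' * p x v v'' * p x v'' v' ∂ν ∂ν := by
  simp only [scattering, ← integral_const_mul]
  rw [integral_integral_swap (hm.integrable_doubleScattering hw hx hv)]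
  congr! 4 with v'
  ring

theorem integrable_phase_mul_transport :
    Integrable (fun v' => p x v v' * transport ν σt σs p w x v') ν := by
  simp only [transport, mul_add]
  exact (hm.integrable_phase_mul_streaming hw hx hv).add
    (hm.integrable_phase_mul_scattering hw hx hv)

theorem scattering_transport :
    scattering ν p (transport ν σt σs p w) x v =
      ∫ v', p x v v' * (-(v' * deriv (fun y => w y v') x) - σt x v' * w x v') ∂ν
        + ∫ v', w x v' * ∫ v'', σs x v'' * p x v v'' * p x v'' v' ∂ν ∂ν := by
  rw [← hm.scattering_scattering hw hx hv]
  simp only [scattering, transport, mul_add]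
  exact integral_add (hm.integrable_phase_mul_streaming hw hx hv)
    (hm.integrable_phase_mul_scattering hw hx hv)

theorem integral_squaredKernel :
    ∫ v', squaredKernel ν σt σs p w x v v' ∂ν =
      (-(v * deriv (fun y => σs y v) x) - σs x v * σt x v) * scattering ν p w x v
        - v * σs x v * ∫ v', deriv (fun y => p y v v' * w y v') x ∂ν
        + σs x v * scattering ν p (transport ν σt σs p w) x v := by
  have hpw := (hm.phase v hv).mul hw
  have hsplit : ∀ᵐ v' ∂ν, squaredKernel ν σt σs p w x v v' =
      (-(v * deriv (fun y => σs y v) x) - σs x v * σt x v) * (p x v v' * w x v')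
        - v * σs x v * deriv (fun y => p y v v' * w y v') x
        + (σs x v * (p x v v' * (-(v' * deriv (fun y => w y v') x) - σt x v' * w x v'))
          + σs x v * (w x v' * ∫ v'', σs x v'' * p x v v'' * p x v'' v' ∂ν)) := by
    filter_upwards [hm.ae_mem] with v' hv'
    rw [squaredKernel, deriv_fun_mul (hm.scatteringRate.differentiableAt x hx v hv)
        ((hm.phase v hv).differentiableAt x hx v' hv'),
      deriv_fun_mul ((hm.phase v hv).differentiableAt x hx v' hv')
        (hw.differentiableAt x hx v' hv')]
    ring
  have hi₁ := hpw.integrable hm.ae_mem hx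
  have hi₂ := hpw.integrable_deriv hm.isOpen hm.ae_mem hx
  have hi₃ := hm.integrable_phase_mul_streaming hw hx hv
  have hi₄ := hm.integrable_mul_doubleScattering hw hx hv
  rw [integral_congr_ae hsplit, integral_add ((hi₁.const_mul _).sub' (hi₂.const_mul _))
      ((hi₃.const_mul _).fun_add (hi₄.const_mul _)),
    integral_sub (hi₁.const_mul _) (hi₂.const_mul _),
    integral_add (hi₃.const_mul _) (hi₄.const_mul _)]
  simp only [integral_const_mul]
  rw [hm.scattering_transport hw hx hv, scattering]
  ring

theorem transport_transport (hw' : DifferentiableAt ℝ (deriv fun y => w y v) x) :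
    transport ν σt σs p (transport ν σt σs p w) x v = squaredTransport ν σt σs p w x v := by
  rw [transport, (hm.hasDerivAt_transport hw hx hv hw').deriv, squaredTransport,
    hm.integral_squaredKernel hw hx hv]
  nth_rw 1 [transport]
  ring

end IsRegularMedium

/-- Regularity of a time-dependent density `u` on positions `X`, velocities `V` and times `(0, T)`:
bounded by `M` together with `∂ₜu`, `∂ₓu` and `∂ₓ∂ₜu`, and twice continuously differentiable in
position and time, but only measurable in velocity. -/
structure IsRegularDensity (V X : Set ℝ) (T M : ℝ) (u : ℝ → ℝ → ℝ → ℝ) : Prop where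
  measurable : ∀ x ∈ X, Measurable (uncurry (u x))
  contDiffAt : ∀ x ∈ X, ∀ v ∈ V, ∀ t ∈ Ioo 0 T,
    ContDiffAt ℝ 2 (fun q : ℝ × ℝ => u q.1 v q.2) (x, t)
  norm_le : ∀ x ∈ X, ∀ v ∈ V, ∀ t ∈ Ioo 0 T, ‖u x v t‖ ≤ M
  norm_deriv_position_le : ∀ x ∈ X, ∀ v ∈ V, ∀ t ∈ Ioo 0 T, ‖deriv (fun y => u y v t) x‖ ≤ M
  norm_deriv_time_le : ∀ x ∈ X, ∀ v ∈ V, ∀ t ∈ Ioo 0 T, ‖deriv (u x v) t‖ ≤ M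
  norm_deriv_mixed_le : ∀ x ∈ X, ∀ v ∈ V, ∀ t ∈ Ioo 0 T,
    ‖deriv (fun y => deriv (u y v) t) x‖ ≤ M

namespace IsRegularDensity

variable {T t : ℝ} {u : ℝ → ℝ → ℝ → ℝ} (hu : IsRegularDensity V X T M u)

include hu

theorem mono (htT : t ≤ T) : IsRegularDensity V X t M u :=
  have hmem {s : ℝ} (hs : s ∈ Ioo 0 t) : s ∈ Ioo 0 T := ⟨hs.1, hs.2.trans_le htT⟩
  { measurable := hu.measurable
    contDiffAt := fun x hx v hv s hs => hu.contDiffAt x hx v hv s (hmem hs)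
    norm_le := fun x hx v hv s hs => hu.norm_le x hx v hv s (hmem hs)
    norm_deriv_position_le := fun x hx v hv s hs => hu.norm_deriv_position_le x hx v hv s (hmem hs)
    norm_deriv_time_le := fun x hx v hv s hs => hu.norm_deriv_time_le x hx v hv s (hmem hs)
    norm_deriv_mixed_le := fun x hx v hv s hs => hu.norm_deriv_mixed_le x hx v hv s (hmem hs) }

theorem isRegularFamily_position (ht : t ∈ Ioo 0 T) :
    IsRegularFamily ν V X M (fun x v => u x v t) where
  aestronglyMeasurable x hx := (hu.measurable x hx).of_uncurry_right.aestronglyMeasurable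
  differentiableAt x hx v hv := (hasDerivAt_fst_of_differentiableAt
    ((hu.contDiffAt x hx v hv t ht).differentiableAt two_ne_zero)).differentiableAt
  norm_le x hx v hv := hu.norm_le x hx v hv t ht
  norm_deriv_le x hx v hv := hu.norm_deriv_position_le x hx v hv t ht

theorem isRegularFamily_time (hx : x ∈ X) :
    IsRegularFamily ν V (Ioo 0 T) M (fun t v => u x v t) where
  aestronglyMeasurable _ _ := (hu.measurable x hx).of_uncurry_right.aestronglyMeasurable
  differentiableAt t ht v hv := (hasDerivAt_snd_of_differentiableAt
    ((hu.contDiffAt x hx v hv t ht).differentiableAt two_ne_zero)).differentiableAt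
  norm_le t ht v hv := hu.norm_le x hx v hv t ht
  norm_deriv_le t ht v hv := hu.norm_deriv_time_le x hx v hv t ht

theorem contDiffAt_deriv_time (hx : x ∈ X) (hv : v ∈ V) (ht : t ∈ Ioo 0 T) :
    ContDiffAt ℝ 1 (fun q : ℝ × ℝ => deriv (u q.1 v) q.2) (x, t) :=
  contDiffAt_deriv_snd (n := 1) (hu.contDiffAt x hx v hv t ht)

theorem isRegularFamily_deriv_time (hv : v ∈ V) :
    IsRegularFamily (volume.restrict (Ioo 0 T)) (Ioo 0 T) X M (fun x t => deriv (u x v) t) where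
  aestronglyMeasurable _ _ := (measurable_deriv _).aestronglyMeasurable
  differentiableAt _ hx _ ht := (hasDerivAt_fst_of_differentiableAt
    ((hu.contDiffAt_deriv_time hx hv ht).differentiableAt one_ne_zero)).differentiableAt
  norm_le x hx := hu.norm_deriv_time_le x hx v hv
  norm_deriv_le x hx := hu.norm_deriv_mixed_le x hx v hv

theorem differentiableAt_deriv_position (hx : x ∈ X) (hv : v ∈ V) (ht : t ∈ Ioo 0 T) :
    DifferentiableAt ℝ (deriv fun y => u y v t) x :=
  (hasDerivAt_fst_of_differentiableAt ((contDiffAt_deriv_fst (n := 1)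
    (hu.contDiffAt x hx v hv t ht)).differentiableAt one_ne_zero)).differentiableAt

theorem hasDerivAt_deriv_position (hx : x ∈ X) (hv : v ∈ V) (ht : t ∈ Ioo 0 T) :
    HasDerivAt (fun τ => deriv (fun y => u y v τ) x) (deriv (fun y => deriv (u y v) t) x) t := by
  have hU := hu.contDiffAt x hx v hv t ht
  refine (deriv_snd_deriv_fst_eq hU) ▸ DifferentiableAt.hasDerivAt ?_
  exact (hasDerivAt_snd_of_differentiableAt
    ((contDiffAt_deriv_fst (n := 1) hU).differentiableAt one_ne_zero)).differentiableAt

theorem continuousOn_deriv_time (hx : x ∈ X) (hv : v ∈ V) :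
    ContinuousOn (deriv (u x v)) (Ioo 0 T) := fun _ ht =>
  ((hu.contDiffAt_deriv_time hx hv ht).continuousAt.comp
    (Continuous.prodMk_right x).continuousAt).continuousWithinAt

theorem continuousOn_deriv_mixed (hx : x ∈ X) (hv : v ∈ V) :
    ContinuousOn (fun t => deriv (fun y => deriv (u y v) t) x) (Ioo 0 T) := fun _ ht =>
  ((contDiffAt_deriv_fst (n := 0) (hu.contDiffAt_deriv_time hx hv ht)).continuousAt.comp
    (Continuous.prodMk_right x).continuousAt).continuousWithinAt

theorem aestronglyMeasurable_deriv_time (hV : ∀ᵐ v ∂ν, v ∈ V) (hx : x ∈ X) :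
    AEStronglyMeasurable (uncurry fun v t => deriv (u x v) t)
      (ν.prod (volume.restrict (Ioo 0 T))) := by
  refine aestronglyMeasurable_deriv_of_ae_differentiableAt (f := fun q => u x q.1)
    (a := Prod.snd) (.of_forall fun h => ?_) ?_
  · exact ((hu.measurable x hx).comp
      (measurable_fst.prodMk (measurable_snd.add_const h))).aestronglyMeasurable
  · filter_upwards [Measure.quasiMeasurePreserving_fst.ae hV,
      Measure.quasiMeasurePreserving_snd.ae (ae_restrict_mem measurableSet_Ioo)] with q hv ht
    exact (hu.isRegularFamily_time (ν := ν) hx).differentiableAt _ ht _ hv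

variable [IsFiniteMeasure ν] (hm : IsRegularMedium ν V X A σt σs p) (hx : x ∈ X) (hv : v ∈ V)

include hm hx hv

theorem hasDerivAt_transport (ht : t ∈ Ioo 0 T) :
    HasDerivAt (fun τ => transport ν σt σs p (fun y v' => u y v' τ) x v)
      (transport ν σt σs p (fun y v' => deriv (u y v') t) x v) t := by
  have htime := hu.isRegularFamily_time (ν := ν) hx
  have hscat : HasDerivAt (fun τ => scattering ν p (fun y v' => u y v' τ) x v)
      (scattering ν p (fun y v' => deriv (u y v') t) x v) t := by
    simpa only [scattering, mul_comm (p x v _)] using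
      htime.hasDerivAt_integral_mul isOpen_Ioo hm.ae_mem
        ((hm.phase v hv).integrable hm.ae_mem hx) ht
  exact (((hu.hasDerivAt_deriv_position hx hv ht).const_mul v).neg.sub
    ((htime.differentiableAt t ht v hv).hasDerivAt.const_mul _)).add (hscat.const_mul _)

theorem isBoundedContinuousOn_transport_deriv_time :
    IsBoundedContinuousOn (fun t => transport ν σt σs p (fun y v' => deriv (u y v') t) x v)
      (Ioo 0 T) := by
  have hmixed : IsBoundedContinuousOn (fun t => deriv (fun y => deriv (u y v) t) x) (Ioo 0 T) :=
    ⟨hu.continuousOn_deriv_mixed hx hv, M, hu.norm_deriv_mixed_le x hx v hv⟩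
  have hrate : IsBoundedContinuousOn (deriv (u x v)) (Ioo 0 T) :=
    ⟨hu.continuousOn_deriv_time hx hv, M, hu.norm_deriv_time_le x hx v hv⟩
  have hscat : IsBoundedContinuousOn
      (fun t => scattering ν p (fun y v' => deriv (u y v') t) x v) (Ioo 0 T) :=
    isBoundedContinuousOn_integral_mul hm.ae_mem ((hm.phase v hv).integrable hm.ae_mem hx)
      (fun t ht => (hu.isRegularFamily_time hx).aestronglyMeasurable_deriv isOpen_Ioo hm.ae_mem ht)
      (fun v' hv' => hu.continuousOn_deriv_time hx hv')
      (fun t ht v' hv' => hu.norm_deriv_time_le x hx v' hv' t ht)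
  refine (((hmixed.const_mul (-v)).add (hrate.const_mul (-σt x v))).add
    (hscat.const_mul (σs x v))).congr fun t _ => ?_
  simp only [transport]
  ring

theorem integrable_phase_mul_deriv_time_div_sqrt :
    Integrable (fun q : ℝ × ℝ => p x v q.1 * deriv (u x q.1) q.2 / √(T - q.2))
      (ν.prod (volume.restrict (Ioo 0 T))) :=
  integrable_prod_mul_div_sqrt_sub hm.ae_mem ((hm.phase v hv).integrable hm.ae_mem hx)
    (hu.aestronglyMeasurable_deriv_time hm.ae_mem hx) (hu.norm_deriv_time_le x hx)

theorem integrable_phase_mul_caputoHalf :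
    Integrable (fun v' => p x v v' * caputoHalf (u x v') T) ν := by
  have hi := (hu.integrable_phase_mul_deriv_time_div_sqrt hm hx hv).integral_prod_left
  simpa only [mul_div_assoc, integral_const_mul, caputoHalf, mul_left_comm (p x v _)] using
    hi.const_mul (Real.Gamma (1 / 2))⁻¹

theorem caputoHalf_transport :
    caputoHalf (fun τ => transport ν σt σs p (fun y v' => u y v' τ) x v) T =
      transport ν σt σs p (fun y v' => caputoHalf (u y v') T) x v := by
  rw [caputoHalf_eq_halfIntegral,
    halfIntegral_congr fun τ hτ => (hu.hasDerivAt_transport hm hx hv hτ).deriv]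
  exact halfIntegral_transport (hu.isRegularFamily_deriv_time hv)
    (hu.integrable_phase_mul_deriv_time_div_sqrt hm hx hv) hm.isOpen hx

theorem transport_caputoHalf_sub_transport (ht : t ∈ Ioo 0 T) :
    transport ν σt σs p (fun y v' => caputoHalf (u y v') t -
        transport ν σt σs p (fun y v' => u y v' t) y v') x v =
      transport ν σt σs p (fun y v' => caputoHalf (u y v') t) x v -
        squaredTransport ν σt σs p (fun y v' => u y v' t) x v := by
  have hut := hu.mono ht.2.le
  have hw := hu.isRegularFamily_position (ν := ν) ht
  have hw' := hu.differentiableAt_deriv_position hx hv ht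
  rw [← hm.transport_transport hw hx hv hw']
  exact transport_sub
    ((hut.isRegularFamily_deriv_time hv).hasDerivAt_halfIntegral hm.isOpen hx).differentiableAt
    (hm.hasDerivAt_transport hw hx hv hw').differentiableAt
    (hut.integrable_phase_mul_caputoHalf hm hx hv) (hm.integrable_phase_mul_transport hw hx hv)

theorem deriv_eq_transport_caputoHalf_add {f : ℝ → ℝ} (hf : DifferentiableOn ℝ f (Ioo 0 T))
    (hf' : IsBoundedContinuousOn (deriv f) (Ioo 0 T))
    (hPDE : EqOn (caputoHalf (u x v))
      (fun τ => transport ν σt σs p (fun y v' => u y v' τ) x v + f τ) (Ioo 0 T))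
    (ht : t ∈ Ioo 0 T) :
    deriv (u x v) t = transport ν σt σs p (fun y v' => caputoHalf (u y v') t) x v
      + caputoHalf f t := by
  let Au (τ : ℝ) : ℝ := transport ν σt σs p (fun y v' => u y v' τ) x v
  have hAu : ∀ τ ∈ Ioo 0 T, HasDerivAt Au
      (transport ν σt σs p (fun y v' => deriv (u y v') τ) x v) τ :=
    fun τ hτ => hu.hasDerivAt_transport hm hx hv hτ
  have hAu_diff : DifferentiableOn ℝ Au (Ioo 0 T) := fun τ hτ =>
    (hAu τ hτ).differentiableAt.differentiableWithinAt
  have hAu' : IsBoundedContinuousOn (deriv Au) (Ioo 0 T) :=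
    (hu.isBoundedContinuousOn_transport_deriv_time hm hx hv).congr fun τ hτ => (hAu τ hτ).deriv
  have hDu' : IsBoundedContinuousOn (deriv (caputoHalf (u x v))) (Ioo 0 T) :=
    (hAu'.add hf').congr fun τ hτ => (hPDE.deriv isOpen_Ioo hτ).trans <| deriv_fun_add
      (hAu τ hτ).differentiableAt (hf.differentiableAt (isOpen_Ioo.mem_nhds hτ))
  have hsub : Ioo 0 t ⊆ Ioo 0 T := Ioo_subset_Ioo_right ht.2.le
  calc deriv (u x v) t = caputoHalf (caputoHalf (u x v)) t :=
        (caputoHalf_caputoHalf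
          ⟨hu.continuousOn_deriv_time hx hv, M, hu.norm_deriv_time_le x hx v hv⟩
          ((hAu_diff.add hf).congr hPDE) hDu' ht).symm
    _ = caputoHalf (fun τ => Au τ + f τ) t := caputoHalf_congr (hPDE.mono hsub)
    _ = caputoHalf Au t + caputoHalf f t :=
        caputoHalf_add (hAu_diff.mono hsub) (hAu'.mono hsub) (hf.mono hsub) (hf'.mono hsub)
    _ = transport ν σt σs p (fun y v' => caputoHalf (u y v') t) x v + caputoHalf f t := by
        rw [(hu.mono ht.2.le).caputoHalf_transport hm hx hv]

end IsRegularDensity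

theorem reduction_half_to_one_general [IsFiniteMeasure ν] {T t : ℝ} {F u : ℝ → ℝ → ℝ → ℝ}
    (hm : IsRegularMedium ν V X A σt σs p) (hu : IsRegularDensity V X T M u)
    (hF : ∀ x ∈ X, ∀ v ∈ V, DifferentiableOn ℝ (F x v) (Ioo 0 T))
    (hF' : ∀ x ∈ X, ∀ v ∈ V, IsBoundedContinuousOn (deriv (F x v)) (Ioo 0 T))
    (hPDE : ∀ x ∈ X, ∀ v ∈ V, ∀ t ∈ Ioo 0 T, caputoHalf (u x v) t =
      transport ν σt σs p (fun y v' => u y v' t) x v + F x v t)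
    (hx : x ∈ X) (hv : v ∈ V) (ht : t ∈ Ioo 0 T) :
    deriv (u x v) t = squaredTransport ν σt σs p (fun y v' => u y v' t) x v
      + (transport ν σt σs p (fun y v' => F y v' t) x v + caputoHalf (F x v) t) := by
  have hsource : transport ν σt σs p (fun y v' => F y v' t) x v =
      transport ν σt σs p (fun y v' => caputoHalf (u y v') t) x v -
        squaredTransport ν σt σs p (fun y v' => u y v' t) x v := by
    rw [← hu.transport_caputoHalf_sub_transport hm hx hv ht]
    exact transport_congr hm.ae_mem hm.isOpen hx hv fun y hy v' hv' =>
      eq_sub_of_add_eq' (hPDE y hy v' hv' t ht).symm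
  rw [hu.deriv_eq_transport_caputoHalf_add hm hx hv (hF x hx v hv) (hF' x hx v hv)
    (hPDE x hx v hv) ht, hsource]
  ring

end Transport

section ClosedDomains

theorem isBoundedContinuousOn_deriv_of_contDiffOn {f : ℝ → ℝ} {a b : ℝ} (hab : a < b)
    (hf : ContDiffOn ℝ 1 f (Icc a b)) : IsBoundedContinuousOn (deriv f) (Ioo a b) := by
  have hcont : ContinuousOn (derivWithin f (Icc a b)) (Icc a b) :=
    hf.continuousOn_derivWithin (uniqueDiffOn_Icc hab) le_rfl
  obtain ⟨C, hC⟩ := isCompact_Icc.exists_bound_of_continuousOn hcont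
  have hderiv : IsBoundedContinuousOn (derivWithin f (Icc a b)) (Icc a b) := ⟨hcont, C, hC⟩
  exact (hderiv.mono Ioo_subset_Icc_self).congr fun t ht =>
    (derivWithin_of_mem_nhds (Icc_mem_nhds ht.1 ht.2)).symm

theorem isRegularFamily_of_contDiffOn_Icc {Λ : Type*} [MeasurableSpace Λ] {ν : Measure Λ}
    {V : Set Λ} {a b M : ℝ} {w : ℝ → Λ → ℝ} (hm : Measurable (uncurry w))
    (hw : ∀ v ∈ V, ContDiffOn ℝ 1 (fun x => w x v) (Icc a b))
    (hb : ∀ x ∈ Icc a b, ∀ v ∈ V, |w x v| ≤ M ∧ |deriv (fun y => w y v) x| ≤ M) :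
    IsRegularFamily ν V (Ioo a b) M w where
  aestronglyMeasurable _ _ := hm.of_uncurry_left.aestronglyMeasurable
  differentiableAt _ hx v hv :=
    ((hw v hv).contDiffAt (Icc_mem_nhds hx.1 hx.2)).differentiableAt one_ne_zero
  norm_le x hx v hv := (hb x (Ioo_subset_Icc_self hx) v hv).1
  norm_deriv_le x hx v hv := (hb x (Ioo_subset_Icc_self hx) v hv).2

theorem isBounded_Vset (v₀ v₁ : ℝ) : Bornology.IsBounded (Vset v₀ v₁) :=
  (Metric.isBounded_Icc _ _).union (Metric.isBounded_Icc _ _)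

theorem measurableSet_Vset (v₀ v₁ : ℝ) : MeasurableSet (Vset v₀ v₁) :=
  measurableSet_Icc.union measurableSet_Icc

theorem isRegularMedium_of_contDiffOn_Icc {V : Set ℝ} {a b M : ℝ} {σt σs : ℝ → ℝ → ℝ}
    {p : ℝ → ℝ → ℝ → ℝ} (hV : Bornology.IsBounded V) (hV' : MeasurableSet V)
    (hσt : ∀ v ∈ V, ContDiffOn ℝ 1 (fun x => σt x v) (Icc a b))
    (hσs : ∀ v ∈ V, ContDiffOn ℝ 1 (fun x => σs x v) (Icc a b))
    (hσ_meas : Measurable (uncurry σt) ∧ Measurable (uncurry σs))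
    (hσ_bdd : ∀ x ∈ Icc a b, ∀ v ∈ V, |σt x v| ≤ M ∧ |σs x v| ≤ M ∧
      |deriv (fun y => σt y v) x| ≤ M ∧ |deriv (fun y => σs y v) x| ≤ M)
    (hp : ∀ v ∈ V, ∀ v' ∈ V, ContDiffOn ℝ 1 (fun x => p x v v') (Icc a b))
    (hp_meas : Measurable fun q : ℝ × ℝ × ℝ => p q.1 q.2.1 q.2.2)
    (hp_bdd : ∀ x ∈ Icc a b, ∀ v ∈ V, ∀ v' ∈ V,
      |p x v v'| ≤ M ∧ |deriv (fun y => p y v v') x| ≤ M) :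
    IsRegularMedium (volume.restrict V) V (Ioo a b) M σt σs p where
  isOpen := isOpen_Ioo
  ae_mem := ae_restrict_mem hV'
  isBounded := hV
  absorption := isRegularFamily_of_contDiffOn_Icc hσ_meas.1 hσt fun x hx v hv =>
    ⟨(hσ_bdd x hx v hv).1, (hσ_bdd x hx v hv).2.2.1⟩
  scatteringRate := isRegularFamily_of_contDiffOn_Icc hσ_meas.2 hσs fun x hx v hv =>
    ⟨(hσ_bdd x hx v hv).2.1, (hσ_bdd x hx v hv).2.2.2⟩
  phase v hv := isRegularFamily_of_contDiffOn_Icc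
    (hp_meas.comp (by fun_prop : Measurable fun q : ℝ × ℝ => (q.1, v, q.2)))
    (hp v hv) fun x hx => hp_bdd x hx v hv
  phase_aestronglyMeasurable _ _ := (hp_meas.comp measurable_prodMk_left).aestronglyMeasurable

end ClosedDomains

/-- Section 3: reduction of the half-order fractional radiative transport
equation `∂ₜ^{1/2}u + v∂ₓu + σₜu = σₛ∫pu dv' + F` to the first-order-in-time
equation `∂ₜu = v²∂ₓ²u + L₁u + ∫K u dv' + f`. -/
theorem reduction_half_to_one
    (ℓ v₀ v₁ T M : ℝ) (hℓ : 0 < ℓ) (hv₀ : 0 < v₀) (hv₀₁ : v₀ < v₁)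
    (hT : 0 < T) (hM : 0 < M)
    (σt σs : ℝ → ℝ → ℝ) (p : ℝ → ℝ → ℝ → ℝ)
    (F : ℝ → ℝ → ℝ → ℝ) (u : ℝ → ℝ → ℝ → ℝ)
    -- coefficients: C¹ in x, bounded measurable in v
    (hσt_reg : ∀ v ∈ Vset v₀ v₁, ContDiffOn ℝ 1 (fun x => σt x v) (Set.Icc 0 ℓ))
    (hσs_reg : ∀ v ∈ Vset v₀ v₁, ContDiffOn ℝ 1 (fun x => σs x v) (Set.Icc 0 ℓ))
    (hσ_meas : Measurable (fun q : ℝ × ℝ => σt q.1 q.2) ∧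
      Measurable (fun q : ℝ × ℝ => σs q.1 q.2))
    (hσ_bdd : ∀ x ∈ Set.Icc 0 ℓ, ∀ v ∈ Vset v₀ v₁,
      |σt x v| ≤ M ∧ |σs x v| ≤ M ∧
      |deriv (fun y => σt y v) x| ≤ M ∧ |deriv (fun y => σs y v) x| ≤ M)
    (hp_reg : ∀ v ∈ Vset v₀ v₁, ∀ v' ∈ Vset v₀ v₁,
      ContDiffOn ℝ 1 (fun x => p x v v') (Set.Icc 0 ℓ))
    (hp_meas : Measurable fun q : ℝ × ℝ × ℝ => p q.1 q.2.1 q.2.2)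
    (hp_bdd : ∀ x ∈ Set.Icc 0 ℓ, ∀ v ∈ Vset v₀ v₁, ∀ v' ∈ Vset v₀ v₁,
      |p x v v'| ≤ M ∧ |deriv (fun y => p y v v') x| ≤ M)
    (hp_pos : ∀ x ∈ Set.Icc 0 ℓ, ∀ v ∈ Vset v₀ v₁, ∀ v' ∈ Vset v₀ v₁, 0 < p x v v')
    -- source: C¹ in (x,t), measurable in v, with ∂ₜ^{1/2}F well defined
    (hF_reg : ∀ v ∈ Vset v₀ v₁,
      ContDiffOn ℝ 1 (fun q : ℝ × ℝ => F q.1 v q.2) (Set.Icc 0 ℓ ×ˢ Set.Icc 0 T))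
    (hF_meas : Measurable fun q : ℝ × ℝ × ℝ => F q.1 q.2.1 q.2.2)
    (hF_caputo : ∀ x ∈ Set.Icc 0 ℓ, ∀ v ∈ Vset v₀ v₁, ∀ t ∈ Set.Ioo 0 T,
      IntegrableOn (fun τ => deriv (fun σ => F x v σ) τ / Real.sqrt (t - τ))
        (Set.Ioo 0 t))
    -- solution: C² in (x,t) with bounded derivatives, measurable in v
    (hu_reg : ∀ v ∈ Vset v₀ v₁,
      ContDiffOn ℝ 2 (fun q : ℝ × ℝ => u q.1 v q.2) (Set.Icc 0 ℓ ×ˢ Set.Icc 0 T))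
    (hu_meas : Measurable fun q : ℝ × ℝ × ℝ => u q.1 q.2.1 q.2.2)
    (hu_bdd : ∀ x ∈ Set.Icc 0 ℓ, ∀ v ∈ Vset v₀ v₁, ∀ t ∈ Set.Icc 0 T,
      |u x v t| ≤ M ∧
      |deriv (fun τ => u x v τ) t| ≤ M ∧
      |deriv (fun y => u y v t) x| ≤ M ∧
      |deriv (deriv (fun τ => u x v τ)) t| ≤ M ∧
      |deriv (deriv (fun y => u y v t)) x| ≤ M)
    -- vanishing data at t = 0
    (hu_init : ∀ x ∈ Set.Icc 0 ℓ, ∀ v ∈ Vset v₀ v₁, u x v 0 = 0)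
    (hu_caputo0 : ∀ x ∈ Set.Icc 0 ℓ, ∀ v ∈ Vset v₀ v₁,
      Filter.Tendsto (fun t => caputoHalf (fun τ => u x v τ) t)
        (nhdsWithin 0 (Set.Ioi 0)) (nhds 0))
    -- the mixed derivative ∂ₓ∂ₜu is continuous and bounded
    (hu_mixed : ∀ v ∈ Vset v₀ v₁,
      ContinuousOn
        (fun q : ℝ × ℝ => deriv (fun y => deriv (fun τ => u y v τ) q.2) q.1)
        (Set.Icc 0 ℓ ×ˢ Set.Icc 0 T) ∧
      ∀ x ∈ Set.Icc 0 ℓ, ∀ t ∈ Set.Icc 0 T,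
        |deriv (fun y => deriv (fun τ => u y v τ) t) x| ≤ M)
    -- t ↦ ∂ₜ^{1/2}u(x,v,t) is absolutely continuous (FTC form, with value 0 at 0)
    (hu_caputoAC : ∀ x ∈ Set.Icc 0 ℓ, ∀ v ∈ Vset v₀ v₁,
      IntegrableOn (deriv (fun r => caputoHalf (fun τ => u x v τ) r)) (Set.Ioo 0 T) ∧
      ∀ t ∈ Set.Icc 0 T,
        caputoHalf (fun τ => u x v τ) t
          = ∫ r in Set.Ioo 0 t, deriv (fun r' => caputoHalf (fun τ => u x v τ) r') r)
    -- the fractional radiative transport equation with source F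
    (hPDE : ∀ x ∈ Set.Ioo 0 ℓ, ∀ v ∈ Vset v₀ v₁, ∀ t ∈ Set.Ioo 0 T,
      caputoHalf (fun τ => u x v τ) t + v * deriv (fun y => u y v t) x
        + σt x v * u x v t
        = σs x v * (∫ v' in Vset v₀ v₁, p x v v' * u x v' t) + F x v t) :
    ∀ x ∈ Set.Ioo 0 ℓ, ∀ v ∈ Vset v₀ v₁, ∀ t ∈ Set.Ioo 0 T,
      deriv (fun τ => u x v τ) t
        = v ^ 2 * deriv (deriv (fun y => u y v t)) x
          + (2 * v * σt x v * deriv (fun y => u y v t) x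
              + (v * deriv (fun y => σt y v) x + (σt x v) ^ 2) * u x v t)
          + (∫ v' in Vset v₀ v₁,
              (-(v * deriv (fun y => σs y v * p y v v') x) * u x v' t
                - σs x v * p x v v' *
                    ((v + v') * deriv (fun y => u y v' t) x
                      + (σt x v + σt x v') * u x v' t)
                + σs x v * u x v' t *
                    ∫ v'' in Vset v₀ v₁, σs x v'' * p x v v'' * p x v'' v'))
          + (-(v * deriv (fun y => F y v t) x) - σt x v * F x v t
              + σs x v * (∫ v' in Vset v₀ v₁, p x v v' * F x v' t)
              + caputoHalf (fun τ => F x v τ) t) := by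
  intro x hx v hv t ht
  have : IsFiniteMeasure (volume.restrict (Vset v₀ v₁)) :=
    isFiniteMeasure_restrict.2 (isBounded_Vset v₀ v₁).measure_lt_top.ne
  have hmedium : IsRegularMedium (volume.restrict (Vset v₀ v₁)) (Vset v₀ v₁) (Ioo 0 ℓ) M σt σs p :=
    isRegularMedium_of_contDiffOn_Icc (isBounded_Vset v₀ v₁) (measurableSet_Vset v₀ v₁)
      hσt_reg hσs_reg hσ_meas hσ_bdd hp_reg hp_meas hp_bdd
  have hu_bdd' {y w s : ℝ} (hy : y ∈ Ioo 0 ℓ) (hw : w ∈ Vset v₀ v₁) (hs : s ∈ Ioo 0 T) :=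
    hu_bdd y (Ioo_subset_Icc_self hy) w hw s (Ioo_subset_Icc_self hs)
  have hdensity : IsRegularDensity (Vset v₀ v₁) (Ioo 0 ℓ) T M u :=
    { measurable := fun y _ => hu_meas.comp measurable_prodMk_left
      contDiffAt := fun y hy w hw s hs => (hu_reg w hw).contDiffAt
        (prod_mem_nhds (Icc_mem_nhds hy.1 hy.2) (Icc_mem_nhds hs.1 hs.2))
      norm_le := fun y hy w hw s hs => (hu_bdd' hy hw hs).1
      norm_deriv_time_le := fun y hy w hw s hs => (hu_bdd' hy hw hs).2.1
      norm_deriv_position_le := fun y hy w hw s hs => (hu_bdd' hy hw hs).2.2.1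
      norm_deriv_mixed_le := fun y hy w hw s hs =>
        (hu_mixed w hw).2 y (Ioo_subset_Icc_self hy) s (Ioo_subset_Icc_self hs) }
  have hF (y : ℝ) (hy : y ∈ Ioo 0 ℓ) (w : ℝ) (hw : w ∈ Vset v₀ v₁) :
      ContDiffOn ℝ 1 (F y w) (Icc 0 T) :=
    (hF_reg w hw).comp (by fun_prop) fun s hs => mk_mem_prod (Ioo_subset_Icc_self hy) hs
  exact reduction_half_to_one_general hmedium hdensity
    (fun y hy w hw => ((hF y hy w hw).differentiableOn one_ne_zero).mono Ioo_subset_Icc_self)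
    (fun y hy w hw => isBoundedContinuousOn_deriv_of_contDiffOn hT (hF y hy w hw))
    (fun y hy w hw s hs => by rw [transport, scattering]; linarith! [hPDE y hy w hw s hs]) hx hv ht
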